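/- Let (H,𝓗) and (U,𝓤) be measurable spaces, let Φ: H×U → H be (𝓗⊗𝓤)/𝓗-measurable, let (Ω,𝓕,P) be a probability space, let ℍ ∈ 𝓗, N ∈ ℕ = {1,2,3,...}, c ∈ (0,1], α, θ ∈ (1,∞), let Z_1,...,Z_N : Ω → U be i.i.d. random variables, let Y_0, Y_1, ..., Y_N : Ω → H be random variables satisfying Y_n = Φ(Y_{n−1}, Z_n) for all n ∈ {1,...,N}, assume that σ(Y_0) and σ(Z_1,...,Z_N) are independent, and let 𝒱 : H → [0,∞) be 𝓗/Borel-measurable. Then E[𝒱(Y_N)] ≥ θ^{(α^N)} · P( {Y_0 ∈ ℍ} ∩ {𝒱(Y_0) ≥ c^{1/(1−α)}·θ} ) · [ Π_{n=1}^{N} inf( { P( {𝒱(Φ(v,Z_1)) ≥ c·𝒱(v)^α} ∩ {Φ(v,Z_1) ∈ ℍ} ) : v ∈ ℍ with 𝒱(v) ≥ θ^{(α^{n−1})} } ∪ {1} ) ] (both sides take values in [0,∞]). -/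

import Mathlib

open MeasureTheory ProbabilityTheory
open scoped ENNReal

/-!
The numbers `K * θ ^ (α ^ n)` with `K = c ^ (1 / (1 - α))` form an orbit of `x ↦ c * x ^ α`, because
`K` is a fixed point of this map. Hence if `V (Y n)` lies above the `n`-th point of the orbit and
the next step satisfies `c * V (Y n) ^ α ≤ V (Y (n + 1))`, then `V (Y (n + 1))` lies above the next
point. As `Y n` is independent of `Z (n + 1)`, each such step costs at most a factor given by
the worst one-step probability, and since `1 ≤ K`, Markov's inequality at time `N` concludes.
-/

section Independence

variable {Ω : Type*} {mΩ : MeasurableSpace Ω} {μ : Measure Ω}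

lemma sup_eq_generateFrom_image2_inter (m₁ m₂ : MeasurableSpace Ω) :
    m₁ ⊔ m₂ = MeasurableSpace.generateFrom
      (Set.image2 (· ∩ ·) {s | MeasurableSet[m₁] s} {s | MeasurableSet[m₂] s}) := by
  refine le_antisymm (sup_le (fun s hs ↦ ?_) fun s hs ↦ ?_) ?_
  · exact MeasurableSpace.measurableSet_generateFrom
      ⟨s, hs, Set.univ, MeasurableSet.univ, Set.inter_univ s⟩
  · exact MeasurableSpace.measurableSet_generateFrom
      ⟨Set.univ, MeasurableSet.univ, s, hs, Set.univ_inter s⟩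
  · apply MeasurableSpace.generateFrom_le
    rintro _ ⟨s, hs, t, ht, rfl⟩
    exact MeasurableSet.inter (le_sup_left (a := m₁) s hs) (le_sup_right (a := m₁) t ht)

lemma isPiSystem_image2_inter {α : Type*} {S T : Set (Set α)} (hS : IsPiSystem S)
    (hT : IsPiSystem T) : IsPiSystem (Set.image2 (· ∩ ·) S T) := by
  rintro _ ⟨s, hs, t, ht, rfl⟩ _ ⟨s', hs', t', ht', rfl⟩ hne
  simp only [Set.inter_inter_inter_comm s t s' t'] at hne ⊢
  exact ⟨_, hS s hs s' hs' hne.left, _, hT t ht t' ht' hne.right, rfl⟩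

lemma indep_sup_left_of_indep_sup_right [IsZeroOrProbabilityMeasure μ]
    {m₁ m₂ m₃ : MeasurableSpace Ω} (h₁ : m₁ ≤ mΩ) (h₂ : m₂ ≤ mΩ) (h₃ : m₃ ≤ mΩ)
    (h₁₂₃ : Indep m₁ (m₂ ⊔ m₃) μ) (h₂₃ : Indep m₂ m₃ μ) : Indep (m₁ ⊔ m₂) m₃ μ := by
  rw [Indep_iff] at h₁₂₃ h₂₃
  refine IndepSets.indep (sup_le h₁ h₂) h₃
    (isPiSystem_image2_inter (@MeasurableSpace.isPiSystem_measurableSet _ m₁)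
      (@MeasurableSpace.isPiSystem_measurableSet _ m₂))
    (@MeasurableSpace.isPiSystem_measurableSet _ m₃)
    (sup_eq_generateFrom_image2_inter m₁ m₂)
    (@MeasurableSpace.generateFrom_measurableSet _ m₃).symm ((IndepSets_iff _ _ _).2 ?_)
  rintro _ u ⟨s, hs, t, ht, rfl⟩ hu
  have ht' : MeasurableSet[m₂ ⊔ m₃] t := le_sup_left (a := m₂) t ht
  have hu' : MeasurableSet[m₂ ⊔ m₃] u := le_sup_right (a := m₂) u hu
  calc μ (s ∩ t ∩ u) = μ s * (μ t * μ u) := by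
        rw [Set.inter_assoc, h₁₂₃ s (t ∩ u) hs (ht'.inter hu'), h₂₃ t u ht hu]
    _ = μ (s ∩ t) * μ u := by rw [h₁₂₃ s t hs ht', mul_assoc]

lemma indep_biSup_of_disjoint_of_forall_mem {ι : Type*} {p : ι → Prop} {m : ι → MeasurableSpace Ω}
    (h_le : ∀ i, p i → m i ≤ mΩ) (h_indep : iIndep (fun i : Subtype p ↦ m i) μ) {S T : Set ι}
    (hS : ∀ i ∈ S, p i) (hT : ∀ i ∈ T, p i) (hST : Disjoint S T) :
    Indep (⨆ i ∈ S, m i) (⨆ i ∈ T, m i) μ := by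
  have biSup_le_subtype {R : Set ι} (hR : ∀ i ∈ R, p i) :
      ⨆ i ∈ R, m i ≤ ⨆ i ∈ (Subtype.val ⁻¹' R : Set (Subtype p)), m i :=
    iSup₂_le fun i hi ↦ le_iSup₂_of_le (⟨i, hR i hi⟩ : Subtype p) hi le_rfl
  exact indep_of_indep_of_le
    (indep_iSup_of_disjoint (fun i : Subtype p ↦ h_le i i.2) h_indep (hST.preimage Subtype.val))
    (biSup_le_subtype hS) (biSup_le_subtype hT)

end Independence

section Recursion

variable {H U Ω : Type*} [mH : MeasurableSpace H] [mU : MeasurableSpace U] {mΩ : MeasurableSpace Ω}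
  {P : Measure Ω} {Φ : H → U → H} {N : ℕ} {Z : ℕ → Ω → U} {Y : ℕ → Ω → H}

lemma measurable_history_of_recursion (hΦ : Measurable (Function.uncurry Φ))
    (hY : ∀ n < N, ∀ ω, Y (n + 1) ω = Φ (Y n ω) (Z (n + 1) ω)) {n : ℕ} (hn : n ≤ N) :
    Measurable[mH.comap (Y 0) ⊔ ⨆ k ∈ Set.Icc 1 n, mU.comap (Z k)] (Y n) := by
  induction n with
  | zero => exact (comap_measurable (Y 0)).mono le_sup_left le_rfl
  | succ n ih =>
    rw [funext (hY n hn)]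
    refine hΦ.comp (((ih (by lia)).mono ?_ le_rfl).prodMk
      ((comap_measurable (Z (n + 1))).mono ?_ le_rfl))
    · exact sup_le_sup_left (biSup_mono fun k hk ↦ ⟨hk.1, hk.2.trans n.le_succ⟩) _
    · exact le_sup_of_le_right (le_iSup₂_of_le (n + 1) ⟨by lia, le_rfl⟩ le_rfl)

lemma measurable_of_recursion (hΦ : Measurable (Function.uncurry Φ)) (hY0 : Measurable (Y 0))
    (hZ : ∀ n, 1 ≤ n → n ≤ N → Measurable (Z n))
    (hY : ∀ n < N, ∀ ω, Y (n + 1) ω = Φ (Y n ω) (Z (n + 1) ω)) {n : ℕ} (hn : n ≤ N) :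
    Measurable (Y n) :=
  (measurable_history_of_recursion hΦ hY hn).mono
    (sup_le hY0.comap_le (iSup₂_le fun k hk ↦ (hZ k hk.1 (hk.2.trans hn)).comap_le)) le_rfl

lemma indepFun_next_noise_of_recursion [IsZeroOrProbabilityMeasure P]
    (hΦ : Measurable (Function.uncurry Φ)) (hY0 : Measurable (Y 0))
    (hZ : ∀ n, 1 ≤ n → n ≤ N → Measurable (Z n))
    (hZindep : iIndepFun (fun n : Finset.Icc 1 N ↦ Z n) P)
    (hY : ∀ n < N, ∀ ω, Y (n + 1) ω = Φ (Y n ω) (Z (n + 1) ω))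
    (hYZ : Indep (mH.comap (Y 0)) (⨆ n ∈ Finset.Icc 1 N, mU.comap (Z n)) P)
    {n : ℕ} (hn : n < N) : IndepFun (Y n) (Z (n + 1)) P := by
  set past : MeasurableSpace Ω := ⨆ k ∈ Set.Icc 1 n, mU.comap (Z k)
  have noise_le (k : ℕ) (hk : k ∈ Finset.Icc 1 N) : mU.comap (Z k) ≤ mΩ :=
    (hZ k (Finset.mem_Icc.1 hk).1 (Finset.mem_Icc.1 hk).2).comap_le
  have mem_of_le {k : ℕ} (hk : k ∈ Set.Icc 1 n) : k ∈ Finset.Icc 1 N :=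
    Finset.mem_Icc.2 ⟨hk.1, hk.2.trans hn.le⟩
  have next_mem : n + 1 ∈ Finset.Icc 1 N := Finset.mem_Icc.2 ⟨by lia, hn⟩
  have past_indep_next : Indep past (mU.comap (Z (n + 1))) P := by
    simpa only [Set.mem_singleton_iff, iSup_iSup_eq_left] using
      indep_biSup_of_disjoint_of_forall_mem noise_le hZindep (S := Set.Icc 1 n) (T := {n + 1})
        (fun _ ↦ mem_of_le) (by simpa using next_mem) (by simp)
  have past_sup_next_le : past ⊔ mU.comap (Z (n + 1)) ≤ ⨆ k ∈ Finset.Icc 1 N, mU.comap (Z k) :=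
    sup_le (biSup_mono fun _ ↦ mem_of_le) (le_iSup₂_of_le (n + 1) next_mem le_rfl)
  have history_indep_next : Indep (mH.comap (Y 0) ⊔ past) (mU.comap (Z (n + 1))) P :=
    indep_sup_left_of_indep_sup_right hY0.comap_le
      (iSup₂_le fun k hk ↦ noise_le k (mem_of_le hk)) (noise_le _ next_mem)
      (indep_of_indep_of_le_right hYZ past_sup_next_le) past_indep_next
  exact (IndepFun_iff_Indep _ _ _).2 <| indep_of_indep_of_le_left history_indep_next
    (measurable_history_of_recursion hΦ hY hn.le).comap_le

lemma measure_mem_mul_le_of_indepFun [IsFiniteMeasure P] {X : Ω → H} {W : Ω → U} {E : Type*}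
    [MeasurableSpace E] {f : H → U → E} (hf : Measurable (Function.uncurry f)) (hX : Measurable X)
    (hW : Measurable W) (hXW : IndepFun X W P) {A : Set H} (hA : MeasurableSet A) {B : Set E}
    (hB : MeasurableSet B) {p : ℝ≥0∞} (hp : ∀ x ∈ A, p ≤ P {ω | f x (W ω) ∈ B}) :
    P {ω | X ω ∈ A} * p ≤ P {ω | f (X ω) (W ω) ∈ B} := by
  have law_section (x : H) :
      P.map W (Prod.mk x ⁻¹' (Function.uncurry f ⁻¹' B)) = P {ω | f x (W ω) ∈ B} :=
    Measure.map_apply hW (measurable_prodMk_left (hf hB))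
  calc P {ω | X ω ∈ A} * p
      = ∫⁻ _ in A, p ∂P.map X := by
        rw [setLIntegral_const, Measure.map_apply hX hA, mul_comm]; rfl
    _ ≤ ∫⁻ x in A, P {ω | f x (W ω) ∈ B} ∂P.map X := setLIntegral_mono' hA hp
    _ ≤ ∫⁻ x, P {ω | f x (W ω) ∈ B} ∂P.map X := setLIntegral_le_lintegral _ _
    _ = P {ω | f (X ω) (W ω) ∈ B} := by
        simp_rw [← law_section]
        rw [← Measure.prod_apply (hf hB),
          ← hXW.map_prod_eq_prod_map_map hX.aemeasurable hW.aemeasurable,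
          Measure.map_apply (hX.prodMk hW) (hf hB)]
        rfl

lemma measure_mem_mul_prod_le_of_recursion [IsFiniteMeasure P]
    (hΦ : Measurable (Function.uncurry Φ)) (hYmeas : ∀ n < N, Measurable (Y n))
    (hZ : ∀ n, 1 ≤ n → n ≤ N → Measurable (Z n))
    (hY : ∀ n < N, ∀ ω, Y (n + 1) ω = Φ (Y n ω) (Z (n + 1) ω))
    (hYZ : ∀ n < N, IndepFun (Y n) (Z (n + 1)) P) {A : ℕ → Set H}
    (hA : ∀ n, MeasurableSet (A n)) {p : ℕ → ℝ≥0∞}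
    (hp : ∀ n < N, ∀ v ∈ A n, p (n + 1) ≤ P {ω | Φ v (Z (n + 1) ω) ∈ A (n + 1)}) :
    P {ω | Y 0 ω ∈ A 0} * ∏ n ∈ Finset.Icc 1 N, p n ≤ P {ω | Y N ω ∈ A N} := by
  suffices ∀ n ≤ N, P {ω | Y 0 ω ∈ A 0} * ∏ k ∈ Finset.Icc 1 n, p k ≤ P {ω | Y n ω ∈ A n} from
    this N le_rfl
  intro n hn
  induction n with
  | zero => simp
  | succ n ih =>
    calc P {ω | Y 0 ω ∈ A 0} * ∏ k ∈ Finset.Icc 1 (n + 1), p k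
        = P {ω | Y 0 ω ∈ A 0} * (∏ k ∈ Finset.Icc 1 n, p k) * p (n + 1) := by
          rw [Finset.prod_Icc_succ_top (by lia), mul_assoc]
      _ ≤ P {ω | Y n ω ∈ A n} * p (n + 1) := by gcongr; exact ih (by lia)
      _ ≤ P {ω | Φ (Y n ω) (Z (n + 1) ω) ∈ A (n + 1)} :=
          measure_mem_mul_le_of_indepFun hΦ (hYmeas n hn) (hZ _ (by lia) hn) (hYZ n hn) (hA n)
            (hA (n + 1)) (hp n hn)
      _ = P {ω | Y (n + 1) ω ∈ A (n + 1)} := by simp only [hY n hn]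

end Recursion

section PowerOrbit

variable {c α θ : ℝ}

/-- The orbit of `c ^ (1 / (1 - α)) * θ` under the map `x ↦ c * x ^ α`, in closed form (valid for
`0 < c`, `α ≠ 1` and `0 ≤ θ`). It provides the levels that `V (Y n)` has to exceed. -/
noncomputable def powerOrbit (c α θ : ℝ) (n : ℕ) : ℝ :=
  c ^ (1 / (1 - α)) * θ ^ (α ^ n)

lemma powerOrbit_zero : powerOrbit c α θ 0 = c ^ (1 / (1 - α)) * θ := by
  rw [powerOrbit, pow_zero, Real.rpow_one]

lemma powerOrbit_nonneg (hc : 0 ≤ c) (hθ : 0 ≤ θ) (n : ℕ) : 0 ≤ powerOrbit c α θ n :=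
  mul_nonneg (Real.rpow_nonneg hc _) (Real.rpow_nonneg hθ _)

lemma rpow_le_powerOrbit (hc0 : 0 < c) (hc1 : c ≤ 1) (hα : 1 ≤ α) (hθ : 0 ≤ θ) (n : ℕ) :
    θ ^ (α ^ n) ≤ powerOrbit c α θ n := by
  refine le_mul_of_one_le_left (Real.rpow_nonneg hθ _) ?_
  exact Real.one_le_rpow_of_pos_of_le_one_of_nonpos hc0 hc1
    (one_div_nonpos.2 (sub_nonpos.2 hα))

lemma mul_rpow_one_div_one_sub_rpow (hc : 0 < c) (hα : α ≠ 1) :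
    c * (c ^ (1 / (1 - α))) ^ α = c ^ (1 / (1 - α)) := by
  have hα' : 1 - α ≠ 0 := sub_ne_zero.2 hα.symm
  calc c * (c ^ (1 / (1 - α))) ^ α = c ^ (1 + 1 / (1 - α) * α) := by
        rw [← Real.rpow_mul hc.le, Real.rpow_add hc, Real.rpow_one]
    _ = c ^ (1 / (1 - α)) := by congr 1; field_simp; ring

lemma mul_powerOrbit_rpow (hc : 0 < c) (hα : α ≠ 1) (hθ : 0 ≤ θ) (n : ℕ) :
    c * powerOrbit c α θ n ^ α = powerOrbit c α θ (n + 1) := by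
  rw [powerOrbit, powerOrbit, Real.mul_rpow (Real.rpow_nonneg hc.le _) (Real.rpow_nonneg hθ _),
    ← mul_assoc, mul_rpow_one_div_one_sub_rpow hc hα, ← Real.rpow_mul hθ, pow_succ]

lemma powerOrbit_succ_le (hc : 0 < c) (hα0 : 0 ≤ α) (hα1 : α ≠ 1) (hθ : 0 ≤ θ) {n : ℕ}
    {x y : ℝ} (hx : powerOrbit c α θ n ≤ x) (hxy : c * x ^ α ≤ y) : powerOrbit c α θ (n + 1) ≤ y :=
  calc powerOrbit c α θ (n + 1) = c * powerOrbit c α θ n ^ α :=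
        (mul_powerOrbit_rpow hc hα1 hθ n).symm
    _ ≤ c * x ^ α := by
        gcongr
        exact powerOrbit_nonneg hc.le hθ n
    _ ≤ y := hxy

end PowerOrbit

section Superlevel

/-- The points of `Hset` at which `V` is at least the `n`-th point of `powerOrbit c α θ`.
The recursion propagates the event that `Y n` lies in this set. -/
def orbitSuperlevel {H : Type*} (V : H → ℝ) (Hset : Set H) (c α θ : ℝ) (n : ℕ) : Set H :=
  {v | v ∈ Hset ∧ powerOrbit c α θ n ≤ V v}

variable {H Ω : Type*} [MeasurableSpace H] [MeasurableSpace Ω] {V : H → ℝ} {Hset : Set H}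
  {c α θ : ℝ}

lemma measurableSet_orbitSuperlevel (hV : Measurable V) (hHset : MeasurableSet Hset) (n : ℕ) :
    MeasurableSet (orbitSuperlevel V Hset c α θ n) :=
  hHset.inter (measurableSet_le measurable_const hV)

lemma measure_growth_le_measure_mem_orbitSuperlevel {U : Type*} [MeasurableSpace U]
    {P : Measure Ω} {f : U → H} (hf : Measurable f) {Z Z' : Ω → U} (hZ : IdentDistrib Z' Z P P)
    (hV : Measurable V) (hHset : MeasurableSet Hset) (hc : 0 < c) (hα0 : 0 ≤ α)
    (hα1 : α ≠ 1) (hθ : 0 ≤ θ) {n : ℕ} {v : H} (hv : v ∈ orbitSuperlevel V Hset c α θ n) :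
    P {ω | c * V v ^ α ≤ V (f (Z' ω)) ∧ f (Z' ω) ∈ Hset} ≤
      P {ω | f (Z ω) ∈ orbitSuperlevel V Hset c α θ (n + 1)} :=
  calc P {ω | c * V v ^ α ≤ V (f (Z' ω)) ∧ f (Z' ω) ∈ Hset}
    _ ≤ P {ω | f (Z' ω) ∈ orbitSuperlevel V Hset c α θ (n + 1)} :=
        measure_mono fun _ hω ↦ ⟨hω.2, powerOrbit_succ_le hc hα0 hα1 hθ hv.2 hω.1⟩
    _ = P {ω | f (Z ω) ∈ orbitSuperlevel V Hset c α θ (n + 1)} :=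
        hZ.measure_mem_eq (hf (measurableSet_orbitSuperlevel hV hHset (n + 1)))

lemma ofReal_mul_measure_orbitSuperlevel_le_lintegral {P : Measure Ω} {X : Ω → H}
    (hX : Measurable X) (hV : Measurable V) (hc0 : 0 < c) (hc1 : c ≤ 1) (hα : 1 ≤ α) (hθ : 0 ≤ θ)
    (n : ℕ) :
    ENNReal.ofReal (θ ^ (α ^ n)) * P {ω | X ω ∈ orbitSuperlevel V Hset c α θ n} ≤
      ∫⁻ ω, ENNReal.ofReal (V (X ω)) ∂P :=
  calc ENNReal.ofReal (θ ^ (α ^ n)) * P {ω | X ω ∈ orbitSuperlevel V Hset c α θ n}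
    _ ≤ ENNReal.ofReal (θ ^ (α ^ n)) *
          P {ω | ENNReal.ofReal (θ ^ (α ^ n)) ≤ ENNReal.ofReal (V (X ω))} := by
        gcongr with ω
        exact fun hω ↦
          ENNReal.ofReal_le_ofReal ((rpow_le_powerOrbit hc0 hc1 hα hθ n).trans hω.2)
    _ ≤ ∫⁻ ω, ENNReal.ofReal (V (X ω)) ∂P :=
        mul_meas_ge_le_lintegral (hV.comp hX).ennreal_ofReal _

end Superlevel

theorem abstract_divergence_bound_single_set_general
    {H U Ω : Type*} [mH : MeasurableSpace H] [mU : MeasurableSpace U] [mΩ : MeasurableSpace Ω]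
    (P : Measure Ω) [IsProbabilityMeasure P]
    (Φ : H → U → H) (hΦ : Measurable (Function.uncurry Φ))
    (Hset : Set H) (hHset : MeasurableSet Hset)
    (N : ℕ) (c α θ : ℝ) (hc0 : 0 < c) (hc1 : c ≤ 1) (hα : 1 < α) (hθ : 0 ≤ θ)
    (Z : ℕ → Ω → U) (hZmeas : ∀ n, 1 ≤ n → n ≤ N → Measurable (Z n))
    (hZindep : iIndepFun (m := fun _ => mU) (fun n : (Finset.Icc 1 N) => Z (n : ℕ)) P)
    (hZid : ∀ n, 1 ≤ n → n ≤ N → P.map (Z n) = P.map (Z 1))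
    (Y : ℕ → Ω → H) (hY0meas : Measurable (Y 0))
    (hYrec : ∀ n, 1 ≤ n → n ≤ N → ∀ ω, Y n ω = Φ (Y (n - 1) ω) (Z n ω))
    (hYZindep : Indep (MeasurableSpace.comap (Y 0) mH)
        (⨆ n ∈ Finset.Icc 1 N, MeasurableSpace.comap (Z n) mU) P)
    (V : H → ℝ) (hV : Measurable V) :
    ENNReal.ofReal (θ ^ (α ^ N)) *
        P ({ω | Y 0 ω ∈ Hset} ∩ {ω | c ^ (1 / (1 - α)) * θ ≤ V (Y 0 ω)}) *
        ∏ n ∈ Finset.Icc 1 N,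
          sInf (((fun v => P {ω | c * V v ^ α ≤ V (Φ v (Z 1 ω)) ∧ Φ v (Z 1 ω) ∈ Hset}) ''
            {v | v ∈ Hset ∧ θ ^ (α ^ (n - 1)) ≤ V v}) ∪ {1}) ≤
      ∫⁻ ω, ENNReal.ofReal (V (Y N ω)) ∂P := by
  have hY (n : ℕ) (hn : n < N) (ω : Ω) : Y (n + 1) ω = Φ (Y n ω) (Z (n + 1) ω) :=
    hYrec (n + 1) (by lia) hn ω
  have hYmeas {n : ℕ} : n ≤ N → Measurable (Y n) := measurable_of_recursion hΦ hY0meas hZmeas hY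
  have hZ1 {n : ℕ} (hn : n < N) : IdentDistrib (Z 1) (Z (n + 1)) P P :=
    ⟨(hZmeas 1 le_rfl (by lia)).aemeasurable, (hZmeas (n + 1) (by lia) hn).aemeasurable,
      (hZid (n + 1) (by lia) hn).symm⟩
  rw [mul_assoc, ← powerOrbit_zero]
  refine le_trans ?_ (ofReal_mul_measure_orbitSuperlevel_le_lintegral (Hset := Hset)
    (hYmeas le_rfl) hV hc0 hc1 hα.le hθ N)
  gcongr
  refine measure_mem_mul_prod_le_of_recursion hΦ (fun n hn ↦ hYmeas hn.le) hZmeas hY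
    (fun n ↦ indepFun_next_noise_of_recursion hΦ hY0meas hZmeas hZindep hY hYZindep)
    (measurableSet_orbitSuperlevel hV hHset) fun n hn v hv ↦ ?_
  exact (sInf_le (.inl ⟨v, ⟨hv.1, (rpow_le_powerOrbit hc0 hc1 hα.le hθ n).trans hv.2⟩, rfl⟩)).trans
    (measure_growth_le_measure_mem_orbitSuperlevel (hΦ.comp measurable_prodMk_left) (hZ1 hn) hV
      hHset hc0 (zero_le_one.trans hα.le) hα.ne' hθ hv)

/-- Corollary of the main abstract lower bound with a single measurable set `ℍ`:
`E[𝒱(Y_N)] ≥ θ^{α^N} · P({Y_0 ∈ ℍ} ∩ {𝒱(Y_0) ≥ c^{1/(1−α)}·θ}) ·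
Π_{n=1}^{N} inf({P({𝒱(Φ(v,Z_1)) ≥ c·𝒱(v)^α} ∩ {Φ(v,Z_1) ∈ ℍ}) :
v ∈ ℍ, 𝒱(v) ≥ θ^{α^{n−1}}} ∪ {1})`. -/
theorem abstract_divergence_bound_single_set
    {H U Ω : Type*} [mH : MeasurableSpace H] [mU : MeasurableSpace U] [mΩ : MeasurableSpace Ω]
    (P : Measure Ω) [IsProbabilityMeasure P]
    (Φ : H → U → H) (hΦ : Measurable (Function.uncurry Φ))
    (Hset : Set H) (hHset : MeasurableSet Hset)
    (N : ℕ) (hN : 1 ≤ N)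
    (c α θ : ℝ) (hc0 : 0 < c) (hc1 : c ≤ 1) (hα : 1 < α) (hθ : 1 < θ)
    (Z : ℕ → Ω → U) (hZmeas : ∀ n, 1 ≤ n → n ≤ N → Measurable (Z n))
    (hZindep : iIndepFun (m := fun _ => mU) (fun n : (Finset.Icc 1 N) => Z (n : ℕ)) P)
    (hZid : ∀ n, 1 ≤ n → n ≤ N → P.map (Z n) = P.map (Z 1))
    (Y : ℕ → Ω → H) (hY0meas : Measurable (Y 0))
    (hYrec : ∀ n, 1 ≤ n → n ≤ N → ∀ ω, Y n ω = Φ (Y (n - 1) ω) (Z n ω))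
    (hYZindep : Indep (MeasurableSpace.comap (Y 0) mH)
        (⨆ n ∈ Finset.Icc 1 N, MeasurableSpace.comap (Z n) mU) P)
    (V : H → ℝ) (hV : Measurable V) (hVpos : ∀ x, 0 ≤ V x) :
    ENNReal.ofReal (θ ^ (α ^ N)) *
        P ({ω | Y 0 ω ∈ Hset} ∩ {ω | c ^ (1 / (1 - α)) * θ ≤ V (Y 0 ω)}) *
        ∏ n ∈ Finset.Icc 1 N,
          sInf (((fun v => P {ω | c * V v ^ α ≤ V (Φ v (Z 1 ω)) ∧ Φ v (Z 1 ω) ∈ Hset}) ''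
            {v | v ∈ Hset ∧ θ ^ (α ^ (n - 1)) ≤ V v}) ∪ {1}) ≤
      ∫⁻ ω, ENNReal.ofReal (V (Y N ω)) ∂P :=
  abstract_divergence_bound_single_set_general P Φ hΦ Hset hHset N c α θ hc0 hc1 hα
    (zero_le_one.trans hθ.le) Z hZmeas hZindep hZid Y hY0meas hYrec hYZindep V hV
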